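/- Let (R,B) be an EIC problem with problem graph G=(V,E) in which every node requests at least one block, and suppose χ(G) ≥ 2. Then for every neighborhood partition {Ñ_1,…,Ñ_n}, Σ_{i=1}^n ω(Ḡ|_{Ñ_i}) ≥ |V|/(χ(G)−1), where ω(Ḡ|_{Ñ_i}) is the maximum size of an independent set of the induced subgraph G|_{Ñ_i}. -/

import Mathlib

open Matrix BigOperators

namespace EIC

variable {n m : ℕ}

/-- The vertex set of the problem graph of the EIC problem `(R, B)`:
one vertex for each requirement pair `(u, a)` with `R u a = 1`. -/
abbrev Vtx (R : Matrix (Fin n) (Fin m) (ZMod 2)) : Type :=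
  {p : Fin n × Fin m // R p.1 p.2 = 1}

/-- `(R, B)` have disjoint supports: no position has both `B = 1` and `R = 1`. -/
def DisjointSupports (R B : Matrix (Fin n) (Fin m) (ZMod 2)) : Prop :=
  ∀ u a, ¬(B u a = 1 ∧ R u a = 1)

/-- The standard basis vector `e_a ∈ F_2^m`. -/
def e (m : ℕ) (a : Fin m) : Fin m → ZMod 2 := Pi.single a 1

/-- `β` (with rows indexed by `ι`) is a centralized linear broadcast solution to `(R, B)`:
for every requirement pair `(u, a)` there is `α` with `e_a = α · [β ; diag(B_u)]`. -/
def IsCentralizedSolution (R B : Matrix (Fin n) (Fin m) (ZMod 2))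
    {ι : Type} [Fintype ι] (β : Matrix ι (Fin m) (ZMod 2)) : Prop :=
  ∀ u a, R u a = 1 →
    ∃ α : ι ⊕ Fin m → ZMod 2,
      e m a = α ᵥ* Matrix.fromRows β (Matrix.diagonal (B u))

/-- `(C)_{(R,B)}`: the minimum length of a centralized linear broadcast solution. -/
noncomputable def Copt (R B : Matrix (Fin n) (Fin m) (ZMod 2)) : ℕ :=
  sInf {h | ∃ β : Matrix (Fin h) (Fin m) (ZMod 2), IsCentralizedSolution R B β}

/-- The vertical concatenation of the matrices `β u`, `u ∈ [n]`. -/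
def vconcat {h : Fin n → ℕ} (β : ∀ u : Fin n, Matrix (Fin (h u)) (Fin m) (ZMod 2)) :
    Matrix ((ℓ : Fin n) × Fin (h ℓ)) (Fin m) (ZMod 2) :=
  Matrix.of fun p => β p.1 p.2

/-- `β⁽¹⁾, …, β⁽ⁿ⁾` is a (decentralized) linear broadcast solution to `(R, B)`. -/
def IsBroadcastSolution (R B : Matrix (Fin n) (Fin m) (ZMod 2))
    {h : Fin n → ℕ} (β : ∀ u : Fin n, Matrix (Fin (h u)) (Fin m) (ZMod 2)) : Prop :=
  (∀ u a, B u a = 0 → ∀ i, β u i a = 0) ∧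
  ∀ u a, R u a = 1 →
    ∃ α : ((ℓ : Fin n) × Fin (h ℓ)) ⊕ Fin m → ZMod 2,
      e m a = α ᵥ* Matrix.fromRows (vconcat β) (Matrix.diagonal (B u))

/-- `(D)_{(R,B)}`: the minimum length of a decentralized linear broadcast solution. -/
noncomputable def Dopt (R B : Matrix (Fin n) (Fin m) (ZMod 2)) : ℕ :=
  sInf {s | ∃ (h : Fin n → ℕ) (β : ∀ u : Fin n, Matrix (Fin (h u)) (Fin m) (ZMod 2)),
    IsBroadcastSolution R B β ∧ ∑ u, h u = s}

/-- A task-based solution: a linear broadcast solution where every requirement pair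
`(u, a)` can be decoded from the broadcast of a single responsible sender `ℓ`. -/
def IsTaskBased (R B : Matrix (Fin n) (Fin m) (ZMod 2))
    {h : Fin n → ℕ} (β : ∀ u : Fin n, Matrix (Fin (h u)) (Fin m) (ZMod 2)) : Prop :=
  IsBroadcastSolution R B β ∧
  ∀ u a, R u a = 1 → ∃ ℓ : Fin n, ∃ α : Fin (h ℓ) ⊕ Fin m → ZMod 2,
    e m a = α ᵥ* Matrix.fromRows (β ℓ) (Matrix.diagonal (B u))

/-- `(T)_{(R,B)}`: the minimum length of a task-based solution. -/
noncomputable def Topt (R B : Matrix (Fin n) (Fin m) (ZMod 2)) : ℕ :=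
  sInf {s | ∃ (h : Fin n → ℕ) (β : ∀ u : Fin n, Matrix (Fin (h u)) (Fin m) (ZMod 2)),
    IsTaskBased R B β ∧ ∑ u, h u = s}

/-- The edge relation of the problem graph: for distinct requirement pairs `(u,a)`, `(w,b)`,
there is an edge from `v_{(u,a)}` to `v_{(w,b)}` iff `B u b = 1` or `a = b`. -/
def probEdge (R B : Matrix (Fin n) (Fin m) (ZMod 2)) (v w : Vtx R) : Prop :=
  v ≠ w ∧ (B v.1.1 w.1.2 = 1 ∨ v.1.2 = w.1.2)

/-- A matrix `A` fits a directed graph with edge relation `E`. -/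
def Fits {V : Type} (E : V → V → Prop) (A : Matrix V V (ZMod 2)) : Prop :=
  (∀ k, A k k = 1) ∧ ∀ k l, k ≠ l → ¬ E k l → A k l = 0

/-- `minrk₂`: the minimum `F₂`-rank of a matrix fitting the graph. -/
noncomputable def minrk {V : Type} [Fintype V] (E : V → V → Prop) : ℕ :=
  sInf {r | ∃ A : Matrix V V (ZMod 2), Fits E A ∧ A.rank = r}

/-- `rminrk₂`: the minimum `F₂`-rank of a matrix in `𝒜` fitting the graph. -/
noncomputable def rminrk {V : Type} [Fintype V] (E : V → V → Prop)
    (𝒜 : Set (Matrix V V (ZMod 2))) : ℕ :=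
  sInf {r | ∃ A ∈ 𝒜, Fits E A ∧ A.rank = r}

/-- The column repetition function `φ_{(R,B)}`: the column of `φ(A)` indexed by
`v_{(u,a)}` is the `a`-th column of `A`. -/
def phi (R : Matrix (Fin n) (Fin m) (ZMod 2))
    (A : Matrix (Vtx R) (Fin m) (ZMod 2)) : Matrix (Vtx R) (Vtx R) (ZMod 2) :=
  Matrix.of fun k v => A k v.1.2

/-- The sender neighborhood `N_u = {v_{(w,b)} ∈ V : B u b = 1}`. -/
def senderNbhd (R B : Matrix (Fin n) (Fin m) (ZMod 2)) (u : Fin n) : Set (Vtx R) :=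
  {v | B u v.1.2 = 1}

/-- A neighborhood partition `{Ñ_1, …, Ñ_n}`. -/
def IsNbhdPartition (R B : Matrix (Fin n) (Fin m) (ZMod 2))
    (N : Fin n → Set (Vtx R)) : Prop :=
  (∀ i, N i ⊆ senderNbhd R B i) ∧
  (∀ i j, i ≠ j → Disjoint (N i) (N j)) ∧
  (⋃ i, N i) = Set.univ

open Classical in
/-- `R^(i)`: the request matrix of the EIC subproblem induced by `Ñ_i`; it has ones
exactly at the requirement pairs whose vertex lies in `Ñ_i`. -/
noncomputable def Rsub (R : Matrix (Fin n) (Fin m) (ZMod 2))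
    (N : Fin n → Set (Vtx R)) (i : Fin n) : Matrix (Fin n) (Fin m) (ZMod 2) :=
  Matrix.of fun u a =>
    if hr : R u a = 1 then (if (⟨(u, a), hr⟩ : Vtx R) ∈ N i then 1 else 0) else 0

open Classical in
/-- `B^(i)`: the has-matrix of the EIC subproblem induced by `Ñ_i`; it agrees with `B`
on the columns of blocks requested in `Ñ_i` and is zero elsewhere. -/
noncomputable def Bsub (R B : Matrix (Fin n) (Fin m) (ZMod 2))
    (N : Fin n → Set (Vtx R)) (i : Fin n) : Matrix (Fin n) (Fin m) (ZMod 2) :=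
  Matrix.of fun u a => if ∃ v ∈ N i, v.1.2 = a then B u a else 0

/-- `Cl` is a clique for the edge relation `E`. -/
def IsClique {V : Type} (E : V → V → Prop) (Cl : Set V) : Prop :=
  ∀ k ∈ Cl, ∀ l ∈ Cl, k ≠ l → E k l

/-- `I` is an independent set for the edge relation `E` (no edge in either direction). -/
def IsIndep {V : Type} (E : V → V → Prop) (I : Set V) : Prop :=
  ∀ k ∈ I, ∀ l ∈ I, k ≠ l → ¬ E k l ∧ ¬ E l k

/-- `χ(Ḡ|_S)`: the minimum number of cliques of the induced subgraph `G|_S`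
needed to partition `S`. -/
noncomputable def cliqueCoverNum {V : Type} (E : V → V → Prop) (S : Set V) : ℕ :=
  sInf {t | ∃ Cl : Fin t → Set V, (∀ i, Cl i ⊆ S) ∧ (∀ i, IsClique E (Cl i)) ∧
    (∀ i j, i ≠ j → Disjoint (Cl i) (Cl j)) ∧ (⋃ i, Cl i) = S}

/-- `χ(G)`: the minimum number of independent sets of `G` needed to partition
its vertex set. -/
noncomputable def chromNum {V : Type} [Fintype V] (E : V → V → Prop) : ℕ :=
  sInf {t | ∃ I : Fin t → Set V, (∀ i, IsIndep E (I i)) ∧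
    (∀ i j, i ≠ j → Disjoint (I i) (I j)) ∧ (⋃ i, I i) = Set.univ}

/-- `ω(Ḡ|_S)`: the maximum size of an independent set of the induced subgraph `G|_S`. -/
noncomputable def indepNum {V : Type} (E : V → V → Prop) (S : Set V) : ℕ :=
  sSup {t | ∃ I ⊆ S, IsIndep E I ∧ I.ncard = t}

/-- The set of neighborhood-cliques: vertex sets of maximal cliques of the induced
subgraphs `G|_{N_i}`, over all senders `i`. -/
def nbhdCliques (R B : Matrix (Fin n) (Fin m) (ZMod 2)) : Set (Set (Vtx R)) :=
  {Cl | ∃ i : Fin n, Cl ⊆ senderNbhd R B i ∧ IsClique (probEdge R B) Cl ∧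
    ∀ Cl', Cl ⊆ Cl' → Cl' ⊆ senderNbhd R B i → IsClique (probEdge R B) Cl' → Cl' = Cl}

theorem ncard_le_indepNum {V : Type} [Fintype V] (E : V → V → Prop) (S I : Set V)
    (hIS : I ⊆ S) (hI : IsIndep E I) : I.ncard ≤ indepNum E S := by
  refine le_csSup ⟨Fintype.card V, ?_⟩ ⟨I, hIS, hI, rfl⟩
  rintro t ⟨J, -, -, rfl⟩
  rw [← Nat.card_eq_fintype_card, ← Set.ncard_univ]
  exact Set.ncard_le_ncard (Set.subset_univ J) (Set.toFinite _)

theorem partition_indep_lower_bound {n m : ℕ}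
    (R B : Matrix (Fin n) (Fin m) (ZMod 2)) (hdisj : DisjointSupports R B)
    (hreq : ∀ u, ∃ a, R u a = 1)
    (hchrom : 2 ≤ chromNum (probEdge R B))
    (N : Fin n → Set (Vtx R)) (hpart : IsNbhdPartition R B N) :
    (Fintype.card (Vtx R) : ℝ) / ((chromNum (probEdge R B) : ℝ) - 1) ≤
      ∑ i, (indepNum (probEdge R B) (N i) : ℝ) := by
  classical
  have hne : {t | ∃ I : Fin t → Set (Vtx R), (∀ i, IsIndep (probEdge R B) (I i)) ∧
      (∀ i j, i ≠ j → Disjoint (I i) (I j)) ∧ (⋃ i, I i) = Set.univ}.Nonempty := by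
    apply Nat.nonempty_of_pos_sInf
    exact lt_of_lt_of_le (by norm_num) hchrom
  have hmem := Nat.sInf_mem hne
  change chromNum (probEdge R B) ∈ _ at hmem
  generalize chromNum (probEdge R B) = t at hmem hchrom ⊢
  obtain ⟨I, hI, -, hU⟩ := hmem
  obtain ⟨hN, -, hNU⟩ := hpart
  have key : ∀ i, (N i).ncard ≤ (t - 1) * indepNum (probEdge R B) (N i) := by
    intro i
    obtain ⟨a, ha⟩ := hreq i
    have hv : (⟨(i, a), ha⟩ : Vtx R) ∈ ⋃ i, I i := by rw [hU]; trivial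
    obtain ⟨j₀, hj₀⟩ := Set.mem_iUnion.1 hv
    have hsub : (N i).toFinset ⊆
        (Finset.univ.erase j₀).biUnion (fun j => (N i ∩ I j).toFinset) := by
      intro w hw
      have hw' : w ∈ N i := by simpa using hw
      have hwU : w ∈ ⋃ i, I i := by rw [hU]; trivial
      obtain ⟨j, hj⟩ := Set.mem_iUnion.1 hwU
      have hB : B i w.1.2 = 1 := hN i hw'
      simp only [Finset.mem_biUnion, Finset.mem_erase, Finset.mem_univ, and_true,
        Set.mem_toFinset, Set.mem_inter_iff]
      refine ⟨j, ?_, hw', hj⟩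
      rintro rfl
      have hvw : (⟨(i, a), ha⟩ : Vtx R) ≠ w := by
        rintro rfl
        exact hdisj i a ⟨hB, ha⟩
      exact (hI _ _ hj₀ _ hj hvw).1 ⟨hvw, Or.inl hB⟩
    rw [Set.ncard_eq_toFinset_card']
    refine (Finset.card_le_card hsub).trans ?_
    refine (Finset.card_biUnion_le_card_mul _ _ (indepNum (probEdge R B) (N i)) ?_).trans ?_
    · intro j _
      rw [← Set.ncard_eq_toFinset_card']
      exact ncard_le_indepNum _ _ _ Set.inter_subset_left
        (fun k hk l hl h => hI j k hk.2 l hl.2 h)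
    · simp
  have hcard : Fintype.card (Vtx R) ≤ ∑ i, (N i).ncard := by
    have : (Finset.univ : Finset (Vtx R)) ⊆ Finset.univ.biUnion (fun i => (N i).toFinset) := by
      intro w _
      have hwU : w ∈ ⋃ i, N i := by rw [hNU]; trivial
      simpa using hwU
    refine (Finset.card_le_card this).trans (Finset.card_biUnion_le.trans ?_)
    exact Finset.sum_le_sum fun i _ => (Set.ncard_eq_toFinset_card' (N i)).ge
  have htot : Fintype.card (Vtx R) ≤ (t - 1) * ∑ i, indepNum (probEdge R B) (N i) := by
    rw [Finset.mul_sum]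
    exact hcard.trans (Finset.sum_le_sum fun i _ => key i)
  have ht : (2 : ℝ) ≤ t := by exact_mod_cast hchrom
  rw [div_le_iff₀ (by linarith)]
  have h2 : (Fintype.card (Vtx R) : ℝ) ≤
      ((t - 1 : ℕ) : ℝ) * ∑ i, (indepNum (probEdge R B) (N i) : ℝ) := by exact_mod_cast htot
  rw [Nat.cast_sub (by omega), Nat.cast_one] at h2
  linarith

end EIC
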